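/- arXiv:2310.06429 — 5 statements merged into one kernel-verified Lean document; each statement's English description precedes it below -/
import Mathlib

section
/- For every z ∈ ℂ with z ∉ {0, 1, −1}, setting x = |z|²/(1+|z|²) and y = |z+1|²/(2(1+|z|²)), the complex identity x/z + 2y/(z²−1) = 1/(z−1) holds. Equivalently, (x,y) solves the linear envelope equation s_z x + t_z y + c_z = 0 obtained by taking the Wirtinger z-derivative of the Aztec diamond tangent-plane data s = (π − Arg z)/π, t = (π + Arg((z+1)/(z−1)))/π, c = (−π + Arg(z−1))/π. -/
open Complex

open scoped ComplexConjugate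

section Field

variable {K : Type*} [Field K] {z w : K}

theorem div_one_add_mul_add_div_mul_sub_one (h1 : z ≠ 1) (hzw : 1 + z * w ≠ 0) :
    w / (1 + z * w) + (w + 1) / ((1 + z * w) * (z - 1)) = 1 / (z - 1) := by
  have hz1 : z - 1 ≠ 0 := sub_ne_zero.mpr h1
  calc w / (1 + z * w) + (w + 1) / ((1 + z * w) * (z - 1))
      = (w * (z - 1) + (w + 1)) / ((1 + z * w) * (z - 1)) := by
        rw [add_div (w * (z - 1)), mul_div_mul_right _ _ hz1]
    _ = (1 + z * w) / ((1 + z * w) * (z - 1)) := by ring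
    _ = 1 / (z - 1) := by rw [div_mul_cancel_left₀ hzw, one_div]

/-- The envelope equation with `conj z` replaced by an independent variable `w`, using
`|z|² = z * conj z` and `|z + 1|² = (z + 1) * (conj z + 1)`. -/
theorem envelope_identity (h0 : z ≠ 0) (h1 : z ≠ 1) (hm1 : z ≠ -1) (hzw : 1 + z * w ≠ 0) :
    z * w / (1 + z * w) / z + (z + 1) * (w + 1) / (1 + z * w) / (z ^ 2 - 1) = 1 / (z - 1) := by
  have first_term : z * w / (1 + z * w) / z = w / (1 + z * w) := by
    rw [div_right_comm, mul_div_cancel_left₀ w h0]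
  have second_term : (z + 1) * (w + 1) / (1 + z * w) / (z ^ 2 - 1) =
      (w + 1) / ((1 + z * w) * (z - 1)) := by
    have hz1 : z + 1 ≠ 0 := fun h => hm1 (eq_neg_of_add_eq_zero_left h)
    rw [div_div, show (1 + z * w) * (z ^ 2 - 1) = (z + 1) * ((1 + z * w) * (z - 1)) by ring,
      mul_div_mul_left _ _ hz1]
  rw [first_term, second_term, div_one_add_mul_add_div_mul_sub_one h1 hzw]

end Field

theorem one_add_mul_conj_ne_zero {𝕜 : Type*} [RCLike 𝕜] (z : 𝕜) : 1 + z * conj z ≠ 0 := by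
  have hpos : 1 + ‖z‖ ^ 2 ≠ 0 := by positivity
  rw [RCLike.mul_conj]
  exact_mod_cast hpos

theorem ofReal_norm_sq_div_one_add_norm_sq (z : ℂ) :
    ((‖z‖ ^ 2 / (1 + ‖z‖ ^ 2) : ℝ) : ℂ) = z * conj z / (1 + z * conj z) := by
  rw [mul_conj']
  push_cast
  rfl

theorem two_mul_ofReal_norm_add_one_sq_div (z : ℂ) :
    2 * ((‖z + 1‖ ^ 2 / (2 * (1 + ‖z‖ ^ 2)) : ℝ) : ℂ) =
      (z + 1) * (conj z + 1) / (1 + z * conj z) := by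
  have norm_sq_add_one : (z + 1) * (conj z + 1) = (‖z + 1‖ : ℂ) ^ 2 := by
    rw [← mul_conj', map_add, map_one]
  rw [norm_sq_add_one, mul_conj']
  push_cast
  rw [← mul_div_assoc, mul_div_mul_left _ _ two_ne_zero]

/-- Aztec diamond envelope identity: for `z ∉ {0, 1, −1}`, with
`x = |z|²/(1+|z|²)` and `y = |z+1|²/(2(1+|z|²))`, one has
`x/z + 2y/(z²−1) = 1/(z−1)`. -/
theorem aztec_diamond_envelope (z : ℂ) (h0 : z ≠ 0) (h1 : z ≠ 1) (hm1 : z ≠ -1)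
    (x y : ℝ)
    (hx : x = ‖z‖ ^ 2 / (1 + ‖z‖ ^ 2))
    (hy : y = ‖z + 1‖ ^ 2 / (2 * (1 + ‖z‖ ^ 2))) :
    (x : ℂ) / z + 2 * (y : ℂ) / (z ^ 2 - 1) = 1 / (z - 1) := by
  rw [hx, hy, ofReal_norm_sq_div_one_add_norm_sq, two_mul_ofReal_norm_add_one_sq_div]
  exact envelope_identity h0 h1 hm1 (one_add_mul_conj_ne_zero z)
end

section
/- Let m₁, m₂ ∈ ℝ with m₂ < m₁, m₂ < 1 and m₁ + m₂ < 2. Define a₂ = −1, a₃ = −√2, a₄ = −(1+√2)(2−m₁−m₂)/(2(1−m₂)), a₅ = −(4−2√2)(1−m₂)/(m₁−m₂), a₆ = −(2−m₁−m₂)/(m₁−m₂), a₇ = −√2(2−m₁−m₂)/(m₁−m₂), and let z(u) = B₁(u−a₄)/((u+1)(u−a₆)) with B₁ = −a₆/a₄. Define the rational function D(u) = −(1/(u−a₆) − 1/(u−a₇)) + (m₁−1)(1/(u−a₅) − 1/(u−a₆)) + (m₁−m₂)(1/(u−a₄) − 1/(u−a₅)) + (m₁−1)(1/(u−a₃) −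 1/(u−a₄)) − (1/(u−a₂) − 1/(u−a₃)). Then for every u₀ ∈ ℂ that is not a pole of z or of D and satisfies z'(u₀) = 0, one has D(u₀) = 0. -/
open Complex

/-!
A degree-two map `z(u) = B (u - a) / ((u - p) (u - q))` is invariant under the involution
`σ` of the line given by `(σ u - a) (u - a) = (p - a) (q - a)`, and its critical points are the
fixed points of `σ`. At such a fixed point `1 / (u - x) + 1 / (u - σ x)` has the same value
`1 / (u - a)` for every `x`. For the octagon, write `a = a₄`, `b = a₅`, `r = a₆` and `s = √2`. Then
`σ` exchanges `a₂ = -1` with `r`, and `a₃ = -s` with `a₇ = s r`, so at a fixed point `D` reduces to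
`(m₁ - 1) (1 / (u + s) - 1 / (u - r)) + (1 - m₂) (1 / (u - a) - 1 / (u - b))`. The weights `m₁ - 1`
and `1 - m₂` are proportional to `1 + r` and `1 - r`, and the choice of `b` makes the numerator a
multiple of the quadratic polynomial whose roots are the fixed points.
-/

theorem deriv_mul_sub_div_mul_eq_zero_iff {𝕜 : Type*} [NontriviallyNormedField 𝕜]
    {B a p q u : 𝕜} (hB : B ≠ 0) (hp : u ≠ p) (hq : u ≠ q) :
    deriv (fun v => B * (v - a) / ((v - p) * (v - q))) u = 0 ↔
      (u - a) ^ 2 = (p - a) * (q - a) := by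
  have hpq : (u - p) * (u - q) ≠ 0 := mul_ne_zero (sub_ne_zero.2 hp) (sub_ne_zero.2 hq)
  have hderiv := ((((hasDerivAt_id u).sub_const a).const_mul B).fun_div
    (((hasDerivAt_id u).sub_const p).fun_mul ((hasDerivAt_id u).sub_const q)) hpq).deriv
  simp only [id_eq] at hderiv
  have hnumerator : B * 1 * ((u - p) * (u - q)) - B * (u - a) * (1 * (u - q) + (u - p) * 1) =
      B * ((p - a) * (q - a) - (u - a) ^ 2) := by ring
  rw [hderiv, hnumerator, div_eq_zero_iff, or_iff_left (pow_ne_zero 2 hpq),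
    mul_eq_zero, or_iff_right hB, sub_eq_zero, eq_comm]

theorem neg_one_sub_mul_sub_eq {R : Type*} [CommRing R] {a r s : R}
    (ha : a * (1 - r) = (1 + s) * r) :
    (-1 - a) * (r - a) = (-s - a) * (s * r - a) := by
  linear_combination (1 - s) * ha

section Field

variable {K : Type*} [Field K] {u a : K}

theorem ne_of_sub_sq_eq_mul {p q : K} (hp : u ≠ p) (hq : u ≠ q)
    (hu : (u - a) ^ 2 = (p - a) * (q - a)) : u ≠ a := by
  rintro rfl
  have hzero : (p - u) * (q - u) = 0 := by simpa using hu.symm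
  exact mul_ne_zero (sub_ne_zero.2 hp.symm) (sub_ne_zero.2 hq.symm) hzero

theorem one_div_sub_add_one_div_sub_eq_one_div_sub {p q : K} (hp : u ≠ p) (hq : u ≠ q)
    (hu : (u - a) ^ 2 = (p - a) * (q - a)) :
    1 / (u - p) + 1 / (u - q) = 1 / (u - a) := by
  have hup : u - p ≠ 0 := sub_ne_zero.2 hp
  have huq : u - q ≠ 0 := sub_ne_zero.2 hq
  have hua : u - a ≠ 0 := sub_ne_zero.2 (ne_of_sub_sq_eq_mul hp hq hu)
  field_simp
  linear_combination hu

variable {s r b : K}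

theorem weighted_one_div_sub_eq_zero (hs : s ^ 2 = 2) (ha : a * (1 - r) = (1 + s) * r)
    (hb : b = -((2 - s) * (1 - r))) (hus : u ≠ -s) (hua : u ≠ a) (hub : u ≠ b) (hur : u ≠ r)
    (hu : (u - a) ^ 2 = (-1 - a) * (r - a)) :
    (1 + r) * (1 / (u - -s) - 1 / (u - r)) + (1 - r) * (1 / (u - a) - 1 / (u - b)) = 0 := by
  have hus' : u - -s ≠ 0 := sub_ne_zero.2 hus
  have hua' : u - a ≠ 0 := sub_ne_zero.2 hua
  have hub' : u - b ≠ 0 := sub_ne_zero.2 hub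
  have hur' : u - r ≠ 0 := sub_ne_zero.2 hur
  have hquadratic : u ^ 2 - 2 * a * u - s * r = 0 := by linear_combination hu + ha
  have hgap : (1 - r) * (a - b) = (s - 1) * (s + r) * (1 + s * r) := by
    rw [hb]
    linear_combination ha - (1 + r * s - r + r ^ 2) * hs
  have hpencil : (1 + r) * ((u - a) * (u - b)) - (s - 1) * (1 + s * r) * ((u - -s) * (u - r)) =
      (s - 1) * (s + r) * (u ^ 2 - 2 * a * u - s * r) := by
    rw [hb]
    linear_combination ((3 - 2 * s) * u - (2 - s) * (1 + r)) * ha +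
      (-(1 + r) * u ^ 2 + (2 * a - 1 + r ^ 2 - (1 + s) * r) * u + (1 + r) * r * (1 + s)) * hs
  calc (1 + r) * (1 / (u - -s) - 1 / (u - r)) + (1 - r) * (1 / (u - a) - 1 / (u - b))
      = ((1 - r) * (a - b) * ((u - -s) * (u - r)) - (s + r) * ((1 + r) * ((u - a) * (u - b)))) /
          ((u - -s) * (u - r) * ((u - a) * (u - b))) := by
        field_simp
        ring
    _ = -(s + r) * ((s - 1) * (s + r) * (u ^ 2 - 2 * a * u - s * r)) /
          ((u - -s) * (u - r) * ((u - a) * (u - b))) := by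
        rw [hgap, ← hpencil]
        ring
    _ = 0 := by simp [hquadratic]

theorem octagon_sum_eq_zero {k m₁ m₂ : K} (hs : s ^ 2 = 2) (ha : a * (1 - r) = (1 + s) * r)
    (hb : b = -((2 - s) * (1 - r))) (hm₁ : m₁ - 1 = k * (1 + r)) (hm₂ : 1 - m₂ = k * (1 - r))
    (hu₁ : u ≠ -1) (hus : u ≠ -s) (hub : u ≠ b) (hur : u ≠ r) (husr : u ≠ s * r)
    (hu : (u - a) ^ 2 = (-1 - a) * (r - a)) :
    -(1 / (u - r) - 1 / (u - s * r))
      + (m₁ - 1) * (1 / (u - b) - 1 / (u - r))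
      + (m₁ - m₂) * (1 / (u - a) - 1 / (u - b))
      + (m₁ - 1) * (1 / (u - -s) - 1 / (u - a))
      - (1 / (u - -1) - 1 / (u - -s)) = 0 := by
  have hpairs : 1 / (u - -1) + 1 / (u - r) = 1 / (u - -s) + 1 / (u - s * r) :=
    (one_div_sub_add_one_div_sub_eq_one_div_sub hu₁ hur hu).trans
      (one_div_sub_add_one_div_sub_eq_one_div_sub hus husr
        (hu.trans (neg_one_sub_mul_sub_eq ha))).symm
  have hweighted := weighted_one_div_sub_eq_zero hs ha hb hus
    (ne_of_sub_sq_eq_mul hu₁ hur hu) hub hur hu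
  linear_combination k * hweighted - hpairs + (1 / (u - -s) - 1 / (u - r)) * hm₁ +
    (1 / (u - a) - 1 / (u - b)) * hm₂

end Field

theorem octagon_critical_points_general {𝕜 : Type*} [NontriviallyNormedField 𝕜] [NeZero (2 : 𝕜)]
    {m₁ m₂ s a₂ a₃ a₄ a₅ a₆ a₇ B₁ u : 𝕜}
    (hm : m₁ ≠ m₂) (hm₂ : m₂ ≠ 1) (hm_add : m₁ + m₂ ≠ 2) (hs : s ^ 2 = 2)
    (ha₂ : a₂ = -1) (ha₃ : a₃ = -s)
    (ha₄ : a₄ = -((1 + s) * (2 - m₁ - m₂)) / (2 * (1 - m₂)))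
    (ha₅ : a₅ = -((4 - 2 * s) * (1 - m₂)) / (m₁ - m₂))
    (ha₆ : a₆ = -(2 - m₁ - m₂) / (m₁ - m₂))
    (ha₇ : a₇ = -(s * (2 - m₁ - m₂)) / (m₁ - m₂))
    (hB₁ : B₁ = -a₆ / a₄)
    (hu₂ : u ≠ a₂) (hu₃ : u ≠ a₃) (hu₅ : u ≠ a₅) (hu₆ : u ≠ a₆) (hu₇ : u ≠ a₇)
    (hcrit : deriv (fun v => B₁ * (v - a₄) / ((v + 1) * (v - a₆))) u = 0) :
    -(1 / (u - a₆) - 1 / (u - a₇))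
      + (m₁ - 1) * (1 / (u - a₅) - 1 / (u - a₆))
      + (m₁ - m₂) * (1 / (u - a₄) - 1 / (u - a₅))
      + (m₁ - 1) * (1 / (u - a₃) - 1 / (u - a₄))
      - (1 / (u - a₂) - 1 / (u - a₃)) = 0 := by
  have h2 : (2 : 𝕜) ≠ 0 := two_ne_zero
  have hsub : m₁ - m₂ ≠ 0 := sub_ne_zero.2 hm
  have hone_sub : 1 - m₂ ≠ 0 := sub_ne_zero.2 hm₂.symm
  have htwo_sub : 2 - m₁ - m₂ ≠ 0 := by rwa [sub_sub, sub_ne_zero, ne_comm]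
  have hone_add : 1 + s ≠ 0 :=
    fun h => one_ne_zero (α := 𝕜) (by linear_combination (s - 1) * h - hs)
  have ha₄_ne : a₄ ≠ 0 :=
    ha₄ ▸ div_ne_zero (neg_ne_zero.2 (mul_ne_zero hone_add htwo_sub)) (mul_ne_zero h2 hone_sub)
  have ha₆_ne : a₆ ≠ 0 := ha₆ ▸ div_ne_zero (neg_ne_zero.2 htwo_sub) hsub
  have hB₁_ne : B₁ ≠ 0 := hB₁ ▸ div_ne_zero (neg_ne_zero.2 ha₆_ne) ha₄_ne
  have ha₄_mul : a₄ * (1 - a₆) = (1 + s) * a₆ := by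
    rw [ha₄, ha₆]
    field_simp
    ring
  have ha₅_eq : a₅ = -((2 - s) * (1 - a₆)) := by
    rw [ha₅, ha₆]
    field_simp
    ring
  have ha₇_eq : a₇ = s * a₆ := by
    rw [ha₇, ha₆]
    ring
  have hweight₁ : m₁ - 1 = (m₁ - m₂) / 2 * (1 + a₆) := by
    rw [ha₆]
    field_simp
    ring
  have hweight₂ : 1 - m₂ = (m₁ - m₂) / 2 * (1 - a₆) := by
    rw [ha₆]
    field_simp
    ring
  subst ha₂ ha₃ ha₇_eq
  refine octagon_sum_eq_zero hs ha₄_mul ha₅_eq hweight₁ hweight₂ hu₂ hu₃ hu₅ hu₆ hu₇ ?_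
  exact (deriv_mul_sub_div_mul_eq_zero_iff hB₁_ne hu₂ hu₆).1
    (by simpa only [sub_neg_eq_add] using hcrit)

/-- For the symmetric octagon domino construction, the rational function `D`
(which is `2πi` times the Wirtinger derivative of the intercept function `c`)
vanishes at every critical point of the degree-2 map
`z(u) = B₁(u−a₄)/((u+1)(u−a₆))` which is not a pole of `z` or of `D`. -/
theorem octagon_critical_points (m₁ m₂ : ℝ) (h1 : m₂ < m₁) (h2 : m₂ < 1)
    (h3 : m₁ + m₂ < 2)
    (a₂ a₃ a₄ a₅ a₆ a₇ B₁ : ℝ)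
    (ha2 : a₂ = -1) (ha3 : a₃ = -Real.sqrt 2)
    (ha4 : a₄ = -((1 + Real.sqrt 2) * (2 - m₁ - m₂)) / (2 * (1 - m₂)))
    (ha5 : a₅ = -((4 - 2 * Real.sqrt 2) * (1 - m₂)) / (m₁ - m₂))
    (ha6 : a₆ = -(2 - m₁ - m₂) / (m₁ - m₂))
    (ha7 : a₇ = -(Real.sqrt 2 * (2 - m₁ - m₂)) / (m₁ - m₂))
    (hB : B₁ = -a₆ / a₄)
    (z D : ℂ → ℂ)
    (hz : z = fun u => (B₁ : ℂ) * (u - (a₄ : ℂ)) / ((u + 1) * (u - (a₆ : ℂ))))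
    (hD : D = fun u =>
      -((1 : ℂ) / (u - (a₆ : ℂ)) - 1 / (u - (a₇ : ℂ)))
      + ((m₁ : ℂ) - 1) * (1 / (u - (a₅ : ℂ)) - 1 / (u - (a₆ : ℂ)))
      + ((m₁ : ℂ) - (m₂ : ℂ)) * (1 / (u - (a₄ : ℂ)) - 1 / (u - (a₅ : ℂ)))
      + ((m₁ : ℂ) - 1) * (1 / (u - (a₃ : ℂ)) - 1 / (u - (a₄ : ℂ)))
      - (1 / (u - (a₂ : ℂ)) - 1 / (u - (a₃ : ℂ)))) :
    ∀ u₀ : ℂ, u₀ ≠ -1 → u₀ ≠ (a₂ : ℂ) → u₀ ≠ (a₃ : ℂ) → u₀ ≠ (a₄ : ℂ) →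
      u₀ ≠ (a₅ : ℂ) → u₀ ≠ (a₆ : ℂ) → u₀ ≠ (a₇ : ℂ) →
      deriv z u₀ = 0 → D u₀ = 0 := by
  subst hz hD
  intro u₀ _ hu₂ hu₃ _ hu₅ hu₆ hu₇ hcrit
  exact octagon_critical_points_general (s := ((√2 : ℝ) : ℂ)) (by exact_mod_cast h1.ne')
    (by exact_mod_cast h2.ne) (by exact_mod_cast h3.ne) (by norm_cast; simp) (by simp [ha2])
    (by simp [ha3]) (by simp [ha4]) (by simp [ha5]) (by simp [ha6]) (by simp [ha7]) (by simp [hB])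
    hu₂ hu₃ hu₅ hu₆ hu₇ hcrit
end

section
/- Let m₁, m₂ ∈ ℝ with m₂ < m₁ and m₂ < 1. Define a₂ = −1, a₃ = −√2, a₄ = −(1+√2)(2−m₁−m₂)/(2(1−m₂)), a₅ = −(4−2√2)(1−m₂)/(m₁−m₂), a₆ = −(2−m₁−m₂)/(m₁−m₂), a₇ = −√2(2−m₁−m₂)/(m₁−m₂). Then the ordering a₇ ≤ a₆ ≤ a₅ ≤ a₄ ≤ a₃ ≤ a₂ holds if and only if m₂ ≥ (3+2√2)m₁ − 2(1+√2). -/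
/-!
Write `s = √2`, `u = 1 - m₂ > 0` and `d = m₁ - m₂ > 0`, so that `2 - m₁ - m₂ = 2 * u - d`. Clearing
denominators and using `s ^ 2 = 2`, each comparison of consecutive tangency parameters becomes a
condition on `d` relative to `u`:

* `a₇ ≤ a₆` says `d ≤ 2 * u`;
* `a₆ ≤ a₅` and `a₄ ≤ a₃` both say `d ≤ (2 * s - 2) * u`;
* `a₅ ≤ a₄` says that `d` is not strictly between `(2 * s - 2) * u` and `(4 - 2 * s) * u`.

As `2 * s - 2` is smaller than both `4 - 2 * s` and `2`, only `d ≤ (2 * s - 2) * u` remains, and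
this is the stated bound divided by `3 + 2 * s = (1 + s) ^ 2`.
-/

section

variable {K : Type*} [Field K] [LinearOrder K] [IsStrictOrderedRing K] {s u d : K}

lemma tangency_seven_le_six_iff (hs : 1 < s) (hd : 0 < d) :
    -(s * (2 * u - d)) / d ≤ -(2 * u - d) / d ↔ d ≤ 2 * u := by
  rw [div_le_div_iff_of_pos_right hd, neg_le_neg_iff, ← sub_nonneg,
    ← sub_one_mul, mul_nonneg_iff_of_pos_left (sub_pos.mpr hs), sub_nonneg]

lemma tangency_six_le_five_iff (hd : 0 < d) :
    -(2 * u - d) / d ≤ -((4 - 2 * s) * u) / d ↔ d ≤ (2 * s - 2) * u := by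
  rw [div_le_div_iff_of_pos_right hd, neg_le_neg_iff]
  constructor <;> intro h <;> linarith

lemma tangency_five_le_four_iff (hs : 0 ≤ s) (hs2 : s ^ 2 = 2) (hu : 0 < u) (hd : 0 < d) :
    -((4 - 2 * s) * u) / d ≤ -((1 + s) * (2 * u - d)) / (2 * u) ↔
      0 ≤ ((2 * s - 2) * u - d) * ((4 - 2 * s) * u - d) := by
  have hfactor : -((1 + s) * (2 * u - d)) * d - -((4 - 2 * s) * u) * (2 * u) =
      (1 + s) * (((2 * s - 2) * u - d) * ((4 - 2 * s) * u - d)) := by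
    linear_combination (4 * s * u ^ 2 - 8 * u ^ 2) * hs2
  rw [div_le_div_iff₀ hd (by positivity), ← sub_nonneg, hfactor,
    mul_nonneg_iff_of_pos_left (by positivity)]

lemma tangency_four_le_three_iff (hs : 0 ≤ s) (hs2 : s ^ 2 = 2) (hu : 0 < u) :
    -((1 + s) * (2 * u - d)) / (2 * u) ≤ -s ↔ d ≤ (2 * s - 2) * u := by
  have hfactor : -s * (2 * u) - -((1 + s) * (2 * u - d)) = (1 + s) * ((2 * s - 2) * u - d) := by
    linear_combination (-2 * u) * hs2
  rw [div_le_iff₀ (by positivity), ← sub_nonneg, hfactor,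
    mul_nonneg_iff_of_pos_left (by positivity), sub_nonneg]

lemma feasibility_bound_iff {m₁ m₂ : K} (hs : 0 ≤ s) (hs2 : s ^ 2 = 2) :
    m₂ ≥ (3 + 2 * s) * m₁ - 2 * (1 + s) ↔ m₁ - m₂ ≤ (2 * s - 2) * (1 - m₂) := by
  have hfactor : m₂ - ((3 + 2 * s) * m₁ - 2 * (1 + s)) =
      (3 + 2 * s) * ((2 * s - 2) * (1 - m₂) - (m₁ - m₂)) := by
    linear_combination (-4 * (1 - m₂)) * hs2
  rw [ge_iff_le, ← sub_nonneg, hfactor, mul_nonneg_iff_of_pos_left (by positivity), sub_nonneg]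

end

/-- Feasibility of the symmetric octagon: the tangency parameters are
correctly ordered, `a₇ ≤ a₆ ≤ a₅ ≤ a₄ ≤ a₃ ≤ a₂`, iff
`m₂ ≥ (3+2√2)m₁ − 2(1+√2)`. -/
theorem octagon_feasibility (m₁ m₂ : ℝ) (h1 : m₂ < m₁) (h2 : m₂ < 1)
    (a₂ a₃ a₄ a₅ a₆ a₇ : ℝ)
    (ha2 : a₂ = -1) (ha3 : a₃ = -Real.sqrt 2)
    (ha4 : a₄ = -((1 + Real.sqrt 2) * (2 - m₁ - m₂)) / (2 * (1 - m₂)))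
    (ha5 : a₅ = -((4 - 2 * Real.sqrt 2) * (1 - m₂)) / (m₁ - m₂))
    (ha6 : a₆ = -(2 - m₁ - m₂) / (m₁ - m₂))
    (ha7 : a₇ = -(Real.sqrt 2 * (2 - m₁ - m₂)) / (m₁ - m₂)) :
    (a₇ ≤ a₆ ∧ a₆ ≤ a₅ ∧ a₅ ≤ a₄ ∧ a₄ ≤ a₃ ∧ a₃ ≤ a₂) ↔
      m₂ ≥ (3 + 2 * Real.sqrt 2) * m₁ - 2 * (1 + Real.sqrt 2) := by
  have hs : 0 ≤ √2 := Real.sqrt_nonneg 2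
  have hs2 : √2 ^ 2 = (2 : ℝ) := Real.sq_sqrt zero_le_two
  have one_lt : 1 < √2 := Real.one_lt_sqrt_two
  have lt_three_halves : √2 < 3 / 2 := Real.sqrt_two_lt_three_halves
  have hu : 0 < 1 - m₂ := sub_pos.mpr h2
  have hd : 0 < m₁ - m₂ := sub_pos.mpr h1
  have hsum : 2 - m₁ - m₂ = 2 * (1 - m₂) - (m₁ - m₂) := by ring
  rw [ha2, ha3, ha4, ha5, ha6, ha7, hsum, tangency_seven_le_six_iff one_lt hd,
    tangency_six_le_five_iff hd, tangency_five_le_four_iff hs hs2 hu hd,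
    tangency_four_le_three_iff hs hs2 hu, feasibility_bound_iff hs hs2]
  refine ⟨fun ordered ↦ ordered.2.1, fun hle ↦ ?_⟩
  have le_upper_root : m₁ - m₂ ≤ (4 - 2 * √2) * (1 - m₂) :=
    hle.trans (mul_le_mul_of_nonneg_right (by linarith) hu.le)
  have le_two_mul : m₁ - m₂ ≤ 2 * (1 - m₂) :=
    hle.trans (mul_le_mul_of_nonneg_right (by linarith) hu.le)
  exact ⟨le_two_mul, hle, mul_nonneg (sub_nonneg.mpr hle) (sub_nonneg.mpr le_upper_root), hle,
    neg_le_neg one_lt.le⟩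
end

section
/- Let r > 1 and let z ∈ ℂ with Im z < 0 and z ≠ 0, and set w = (1−z)/(1−(1−r²)z) and θ = 2π + Arg(z/(1−z)), where Arg is the principal argument. Define t = (π + Arg z)/θ and s = (π − Arg w)/θ. Then π < θ < 2π, s > 0, t > 0, and s + t < 1; that is, (s,t) lies in the interior of the triangle N = conv{(0,0),(1,0),(0,1)}, the Newton polygon of the five-vertex model. -/
open Complex

/-!
With `v = 1 - (1 - r²) z`, the points `z / (1 - z)` and `v` lie in the lower half-plane, and `1 - z`
and `w` in the upper one. The arguments of a point of the upper half-plane and of one of the lower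
half-plane add up without crossing the branch cut, so `z = (z / (1 - z)) (1 - z)` and `1 - z = w v`
give `θ = 2π + Arg z - Arg (1 - z)` and `Arg (1 - z) = Arg w + Arg v`. The numerator of `s + t` is
therefore `θ + Arg v < θ`.
-/

theorem arg_pos_of_im_pos {x : ℂ} (hx : 0 < x.im) : 0 < x.arg :=
  (arg_nonneg_iff.2 hx.le).lt_of_ne fun h => hx.ne (arg_eq_zero_iff.1 h.symm).2.symm

theorem arg_lt_pi_of_im_pos {x : ℂ} (hx : 0 < x.im) : x.arg < Real.pi :=
  arg_lt_pi_iff.2 (.inr hx.ne')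

theorem arg_mul_of_im_pos_of_im_neg {x y : ℂ} (hx : 0 < x.im) (hy : y.im < 0) :
    (x * y).arg = x.arg + y.arg := by
  have hx0 : x ≠ 0 := by rintro rfl; exact hx.ne rfl
  have hy0 : y ≠ 0 := by rintro rfl; exact hy.ne rfl
  have hx_pos := arg_pos_of_im_pos hx
  have hx_lt := arg_lt_pi_of_im_pos hx
  have hy_neg := arg_neg_iff.2 hy
  have hy_gt := neg_pi_lt_arg y
  exact arg_mul hx0 hy0 ⟨by linarith, by linarith⟩

theorem im_mobius (a b c d : ℝ) (z : ℂ) :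
    ((a * z + b) / (c * z + d)).im = (a * d - b * c) * z.im / normSq (c * z + d) := by
  simp only [div_im, add_im, add_re, im_ofReal_mul, re_ofReal_mul, ofReal_im, ofReal_re]
  ring

theorem one_sub_ofReal_mul_ne_zero (c : ℝ) {z : ℂ} (hz : z.im ≠ 0) : 1 - c * z ≠ 0 := by
  intro h
  have hc : c = 0 := by simpa [hz] using congrArg im h
  simp [hc] at h

theorem one_sub_ne_zero_of_im_ne_zero {z : ℂ} (hz : z.im ≠ 0) : 1 - z ≠ 0 := by
  simpa using one_sub_ofReal_mul_ne_zero 1 hz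

theorem im_one_sub_pos {z : ℂ} (hz : z.im < 0) : 0 < (1 - z).im := by
  simpa using hz

theorem im_div_one_sub_neg {z : ℂ} (hz : z.im < 0) : (z / (1 - z)).im < 0 := by
  have him : (z / (1 - z)).im = z.im / normSq (1 - z) := by
    simpa [neg_add_eq_sub] using im_mobius 1 0 (-1) 1 z
  rw [him]
  exact div_neg_of_neg_of_pos hz (normSq_pos.2 (one_sub_ne_zero_of_im_ne_zero hz.ne))

theorem arg_div_one_sub {z : ℂ} (hz : z.im < 0) : (z / (1 - z)).arg = z.arg - (1 - z).arg := by
  have h := arg_mul_of_im_pos_of_im_neg (im_one_sub_pos hz) (im_div_one_sub_neg hz)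
  rw [mul_div_cancel₀ z (one_sub_ne_zero_of_im_ne_zero hz.ne)] at h
  linarith

theorem im_one_sub_div_one_sub_ofReal_mul_pos {z : ℂ} (hz : z.im < 0) {c : ℝ} (hc : c < 1) :
    0 < ((1 - z) / (1 - c * z)).im := by
  have him : ((1 - z) / (1 - c * z)).im = (c - 1) * z.im / normSq (1 - c * z) := by
    simpa [neg_add_eq_sub] using im_mobius (-1) 1 (-c) 1 z
  rw [him]
  exact div_pos (mul_pos_of_neg_of_neg (sub_neg.2 hc) hz)
    (normSq_pos.2 (one_sub_ofReal_mul_ne_zero c hz.ne))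

theorem arg_one_sub_lt_arg_one_sub_div_one_sub_ofReal_mul {z : ℂ} (hz : z.im < 0) {c : ℝ}
    (hc : c < 0) : (1 - z).arg < ((1 - z) / (1 - c * z)).arg := by
  have hv : (1 - c * z).im < 0 := by simpa using mul_pos_of_neg_of_neg hc hz
  have hw := im_one_sub_div_one_sub_ofReal_mul_pos hz (hc.trans one_pos)
  have h := arg_mul_of_im_pos_of_im_neg hw hv
  rw [div_mul_cancel₀ _ (one_sub_ofReal_mul_ne_zero c hz.ne)] at h
  linarith [arg_neg_iff.2 hv]

/-- For the five-vertex model with `r > 1` and `z` in the open lower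
half-plane, `z ≠ 0`, with `w = (1−z)/(1−(1−r²)z)`, `θ = 2π + Arg(z/(1−z))`,
`t = (π + Arg z)/θ` and `s = (π − Arg w)/θ`, one has `π < θ < 2π`, `s > 0`,
`t > 0` and `s + t < 1`: the slope `(s,t)` lies in the interior of the
Newton polygon `N = conv{(0,0),(1,0),(0,1)}`. -/
theorem five_vertex_slope_in_newton_polygon (r : ℝ) (hr : 1 < r)
    (z : ℂ) (hz : z.im < 0) (h0 : z ≠ 0)
    (w : ℂ) (hw : w = (1 - z) / (1 - (1 - (r : ℂ) ^ 2) * z))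
    (θ s t : ℝ)
    (hθ : θ = 2 * Real.pi + Complex.arg (z / (1 - z)))
    (ht : t = (Real.pi + Complex.arg z) / θ)
    (hs : s = (Real.pi - Complex.arg w) / θ) :
    Real.pi < θ ∧ θ < 2 * Real.pi ∧ 0 < s ∧ 0 < t ∧ s + t < 1 := by
  have hc : 1 - r ^ 2 < 0 := sub_neg.2 (one_lt_pow₀ hr two_ne_zero)
  have hw' : w = (1 - z) / (1 - ((1 - r ^ 2 : ℝ) : ℂ) * z) := by rw [hw]; push_cast; rfl
  have hw_lt_pi : w.arg < Real.pi := hw' ▸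
    arg_lt_pi_of_im_pos (im_one_sub_div_one_sub_ofReal_mul_pos hz (hc.trans one_pos))
  have hw_gt : (1 - z).arg < w.arg := hw' ▸ arg_one_sub_lt_arg_one_sub_div_one_sub_ofReal_mul hz hc
  have hθ_gt : Real.pi < θ := by linarith [neg_pi_lt_arg (z / (1 - z))]
  have hθ_lt : θ < 2 * Real.pi := by linarith [arg_neg_iff.2 (im_div_one_sub_neg hz)]
  have hθ_pos : 0 < θ := Real.pi_pos.trans hθ_gt
  refine ⟨hθ_gt, hθ_lt, ?_, ?_, ?_⟩
  · exact hs ▸ div_pos (sub_pos.2 hw_lt_pi) hθ_pos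
  · exact ht ▸ div_pos (by linarith [neg_pi_lt_arg z]) hθ_pos
  · rw [hs, ht, ← add_div, div_lt_one hθ_pos]
    linarith [arg_div_one_sub hz]
end

section
/- Let m > 0 and define a₂ = −√m/(2^{1/4}√(m+2)), a₃ = −2^{1/4}√m/√(m+2), a₄ = −((2+√2)/2^{7/4})·√(m(m+2))/(m+1), and a₅ = 1/a₄, a₆ = 1/a₃, a₇ = 1/a₂. Let z(u) = −(u−a₃)(u−a₇)/(u(u−a₅)) and define the rational function D(u) = −1/(u−a₇) + (m+1)/(u−a₅) − (m+1)/(u−a₄) + 1/(u−a₂). Then for every u₀ ∈ ℂ that is not a pole of z or of D and satisfies z'(u₀) = 0, one has D(u₀) = 0. -/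
open Complex

/-!
The parameters make the critical equation of `z` self-reciprocal: since
`a₃ + a₇ = (1 + a₃ a₇) a₅` and `a₅ = 1 / a₄`, a critical point `u` satisfies `u² + 1 = 2 a₄ u`.
The poles of `D` form the two reciprocal pairs `(a₂, a₇)` and `(a₄, a₅)`. For a pair `p q = 1` the
relation for `u` turns `(u - p) (u - q)` into `(2 a₄ - p - q) u`, so `1 / (u - p) - 1 / (u - q)`
is a constant multiple of `1 / u`. The constant is `1` for `(a₄, a₅)`, and
`a₂ - a₇ = (m + 1) (2 a₄ - a₂ - a₇)` says that it is `m + 1` for `(a₂, a₇)`; hence the two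
contributions to `D` cancel.
-/

namespace FiveVertexBPP

section CriticalPoints

variable {𝕜 : Type*} [NontriviallyNormedField 𝕜] {a b c u : 𝕜}

theorem deriv_neg_mul_div_mul_eq_zero_iff (hu : u ≠ 0) (huc : u ≠ c) :
    deriv (fun v => -((v - a) * (v - b)) / (v * (v - c))) u = 0 ↔
      (a + b - c) * u ^ 2 + a * b * c = 2 * (a * b) * u := by
  have hden : u * (u - c) ≠ 0 := mul_ne_zero hu (sub_ne_zero.2 huc)
  have hsub (d : 𝕜) : HasDerivAt (fun v => v - d) 1 u := (hasDerivAt_id' u).sub_const d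
  have hquot := ((hsub a).fun_mul (hsub b)).fun_neg.fun_div
    ((hasDerivAt_id' u).fun_mul (hsub c)) hden
  rw [hquot.deriv, div_eq_zero_iff, or_iff_left (pow_ne_zero 2 hden)]
  constructor <;> intro h <;> linear_combination -h

theorem deriv_neg_mul_div_mul_eq_zero_iff_of_add_eq (hu : u ≠ 0) (huc : u ≠ c)
    (hab : a * b ≠ 0) (hadd : a + b = (1 + a * b) * c) :
    deriv (fun v => -((v - a) * (v - b)) / (v * (v - c))) u = 0 ↔ c * (u ^ 2 + 1) = 2 * u := by
  rw [deriv_neg_mul_div_mul_eq_zero_iff hu huc, hadd,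
    ← mul_right_inj' hab (b := c * (u ^ 2 + 1))]
  constructor <;> intro h <;> linear_combination h

end CriticalPoints

theorem one_div_sub_sub_one_div_sub_eq_div {K : Type*} [Field K] {p q r k u : K}
    (hpq : p * q = 1) (hk : p - q = k * (2 * r - p - q)) (hu : u ^ 2 + 1 = 2 * r * u)
    (hup : u ≠ p) (huq : u ≠ q) : 1 / (u - p) - 1 / (u - q) = k / u := by
  have hu₀ : u ≠ 0 := by
    rintro rfl
    simp at hu
  have hfactor : (u - p) * (u - q) = (2 * r - p - q) * u := by linear_combination hu + hpq
  rw [div_sub_div _ _ (sub_ne_zero.2 hup) (sub_ne_zero.2 huq),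
    div_eq_div_iff (mul_ne_zero (sub_ne_zero.2 hup) (sub_ne_zero.2 huq)) hu₀, hfactor]
  linear_combination u * hk

section Parameters

/-- The parameter `a₂` of the limit shape, a pole of `D`. -/
noncomputable def a₂ (m : ℝ) : ℝ :=
  -Real.sqrt m / ((2 : ℝ) ^ ((1 : ℝ) / 4) * Real.sqrt (m + 2))

/-- The parameter `a₃` of the limit shape, a zero of `z`. -/
noncomputable def a₃ (m : ℝ) : ℝ :=
  -((2 : ℝ) ^ ((1 : ℝ) / 4) * Real.sqrt m) / Real.sqrt (m + 2)

/-- The parameter `a₄` of the limit shape, a pole of `D`; it is the mean of the two critical points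
of `z`. -/
noncomputable def a₄ (m : ℝ) : ℝ :=
  -((2 + Real.sqrt 2) / (2 : ℝ) ^ ((7 : ℝ) / 4)) * (Real.sqrt (m * (m + 2)) / (m + 1))

/-- The parameter `a₅` of the limit shape, a common pole of `z` and `D`. -/
noncomputable def a₅ (m : ℝ) : ℝ := 1 / a₄ m

/-- The parameter `a₇` of the limit shape, a zero of `z` and a pole of `D`. -/
noncomputable def a₇ (m : ℝ) : ℝ := 1 / a₂ m

theorem two_rpow_one_fourth_sq : ((2 : ℝ) ^ ((1 : ℝ) / 4)) ^ 2 = √2 := by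
  rw [Real.sqrt_eq_rpow, ← Real.rpow_mul_natCast zero_le_two]
  norm_num

theorem two_rpow_seven_fourths : (2 : ℝ) ^ ((7 : ℝ) / 4) = 2 * √2 * 2 ^ ((1 : ℝ) / 4) := by
  rw [Real.sqrt_eq_rpow, ← Real.rpow_one_add' zero_le_two (by norm_num),
    ← Real.rpow_add zero_lt_two]
  norm_num

variable {m : ℝ}

theorem sqrt_two_mul_add_two_mul_a₂_sq (hm : 0 ≤ m) : √2 * (m + 2) * a₂ m ^ 2 = m := by
  rw [a₂, div_pow, neg_sq, mul_pow, two_rpow_one_fourth_sq, Real.sq_sqrt hm,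
    Real.sq_sqrt (by positivity)]
  field_simp

theorem a₃_eq_sqrt_two_mul_a₂ (m : ℝ) : a₃ m = √2 * a₂ m := by
  rw [a₃, a₂, ← two_rpow_one_fourth_sq]
  field_simp

theorem a₄_eq_mul_a₂ (hm : 0 ≤ m) : a₄ m = (1 + √2) / 2 * ((m + 2) / (m + 1)) * a₂ m := by
  have hsq : √(m + 2) ^ 2 = m + 2 := Real.sq_sqrt (by positivity)
  have htwo : √2 ^ 2 = 2 := Real.sq_sqrt zero_le_two
  rw [a₄, a₂, two_rpow_seven_fourths, Real.sqrt_mul hm]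
  field_simp
  rw [hsq]
  linear_combination √m * (m + 2) * htwo

theorem a₂_ne_zero (hm : 0 < m) : a₂ m ≠ 0 := by
  intro ha₂
  have hsq := sqrt_two_mul_add_two_mul_a₂_sq hm.le
  simp [ha₂, hm.ne] at hsq

theorem a₄_ne_zero (hm : 0 < m) : a₄ m ≠ 0 := by
  rw [a₄_eq_mul_a₂ hm.le]
  exact mul_ne_zero (by positivity) (a₂_ne_zero hm)

theorem a₂_mul_a₇ (hm : 0 < m) : a₂ m * a₇ m = 1 := mul_one_div_cancel (a₂_ne_zero hm)

theorem a₄_mul_a₅ (hm : 0 < m) : a₄ m * a₅ m = 1 := mul_one_div_cancel (a₄_ne_zero hm)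

theorem a₃_mul_a₇ (hm : 0 < m) : a₃ m * a₇ m = √2 := by
  rw [a₃_eq_sqrt_two_mul_a₂, mul_assoc, a₂_mul_a₇ hm, mul_one]

theorem a₃_add_a₇ (hm : 0 < m) : a₃ m + a₇ m = (1 + a₃ m * a₇ m) * a₅ m := by
  have ha₂ := a₂_ne_zero hm
  rw [a₃_mul_a₇ hm, a₃_eq_sqrt_two_mul_a₂, a₇, a₅, a₄_eq_mul_a₂ hm.le]
  field_simp
  linear_combination sqrt_two_mul_add_two_mul_a₂_sq hm.le

theorem a₂_sub_a₇ (hm : 0 < m) :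
    a₂ m - a₇ m = (m + 1) * (2 * a₄ m - a₂ m - a₇ m) := by
  have ha₂ := a₂_ne_zero hm
  rw [a₇, a₄_eq_mul_a₂ hm.le]
  field_simp
  linear_combination -sqrt_two_mul_add_two_mul_a₂_sq hm.le

theorem sq_add_one_eq_of_deriv_eq_zero (hm : 0 < m) {u : ℂ} (hu : u ≠ 0) (hu₅ : u ≠ a₅ m)
    (hderiv : deriv (fun v : ℂ => -((v - a₃ m) * (v - a₇ m)) / (v * (v - a₅ m))) u = 0) :
    u ^ 2 + 1 = 2 * a₄ m * u := by
  have h37 : a₃ m * a₇ m ≠ 0 := by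
    rw [a₃_mul_a₇ hm]
    positivity
  have h45 : (a₄ m : ℂ) * a₅ m = 1 := mod_cast a₄_mul_a₅ hm
  have hcrit : a₅ m * (u ^ 2 + 1) = 2 * u :=
    (deriv_neg_mul_div_mul_eq_zero_iff_of_add_eq hu hu₅ (mod_cast h37)
      (mod_cast a₃_add_a₇ hm)).1 hderiv
  linear_combination a₄ m * hcrit - (u ^ 2 + 1) * h45

end Parameters

end FiveVertexBPP

/-- Five-vertex boxed plane partition: the rational function `D` (which is
`2i` times the Wirtinger derivative of the numerator `G` of the intercept)
vanishes at every critical point of the degree-2 map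
`z(u) = −(u−a₃)(u−a₇)/(u(u−a₅))` which is not a pole of `z` or of `D`. -/
theorem five_vertex_bpp_critical_points (m : ℝ) (hm : 0 < m)
    (a₂ a₃ a₄ a₅ a₆ a₇ : ℝ)
    (h2 : a₂ = -Real.sqrt m / ((2 : ℝ) ^ ((1 : ℝ) / 4) * Real.sqrt (m + 2)))
    (h3 : a₃ = -((2 : ℝ) ^ ((1 : ℝ) / 4) * Real.sqrt m) / Real.sqrt (m + 2))
    (h4 : a₄ = -((2 + Real.sqrt 2) / (2 : ℝ) ^ ((7 : ℝ) / 4)) *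
      (Real.sqrt (m * (m + 2)) / (m + 1)))
    (h5 : a₅ = 1 / a₄) (h6 : a₆ = 1 / a₃) (h7 : a₇ = 1 / a₂)
    (z D : ℂ → ℂ)
    (hz : z = fun u => -((u - (a₃ : ℂ)) * (u - (a₇ : ℂ))) / (u * (u - (a₅ : ℂ))))
    (hD : D = fun u => -1 / (u - (a₇ : ℂ)) + ((m : ℂ) + 1) / (u - (a₅ : ℂ))
      - ((m : ℂ) + 1) / (u - (a₄ : ℂ)) + 1 / (u - (a₂ : ℂ))) :
    ∀ u₀ : ℂ, u₀ ≠ 0 → u₀ ≠ (a₂ : ℂ) → u₀ ≠ (a₄ : ℂ) → u₀ ≠ (a₅ : ℂ) →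
      u₀ ≠ (a₇ : ℂ) → deriv z u₀ = 0 → D u₀ = 0 := by
  obtain rfl : a₂ = FiveVertexBPP.a₂ m := h2
  obtain rfl : a₃ = FiveVertexBPP.a₃ m := h3
  obtain rfl : a₄ = FiveVertexBPP.a₄ m := h4
  obtain rfl : a₅ = FiveVertexBPP.a₅ m := h5
  obtain rfl : a₇ = FiveVertexBPP.a₇ m := h7
  intro u hu₀ hu₂ hu₄ hu₅ hu₇ hderiv
  rw [hz] at hderiv
  have h27 : (FiveVertexBPP.a₂ m : ℂ) * FiveVertexBPP.a₇ m = 1 :=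
    mod_cast FiveVertexBPP.a₂_mul_a₇ hm
  have h45 : (FiveVertexBPP.a₄ m : ℂ) * FiveVertexBPP.a₅ m = 1 :=
    mod_cast FiveVertexBPP.a₄_mul_a₅ hm
  have hquad := FiveVertexBPP.sq_add_one_eq_of_deriv_eq_zero hm hu₀ hu₅ hderiv
  have pair27 := FiveVertexBPP.one_div_sub_sub_one_div_sub_eq_div (k := (m : ℂ) + 1) h27
    (mod_cast FiveVertexBPP.a₂_sub_a₇ hm) hquad hu₂ hu₇
  have pair45 := FiveVertexBPP.one_div_sub_sub_one_div_sub_eq_div (k := 1) h45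
    (by ring) hquad hu₄ hu₅
  rw [hD]
  linear_combination pair27 - ((m : ℂ) + 1) * pair45
end
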